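/- arXiv:2203.06733 — 2 statements merged into one kernel-verified Lean document; each statement's English description precedes it below -/
import Mathlib

section
/- Let A ⊆ ℝ^d be polynomially discrete with constants c, h > 0. Then there exists C < ∞ such that the number of points of A in the ball B(0,r) satisfies #(A ∩ B(0,r)) ≤ C r^{d(h+1)} for all r ≥ 1. -/
open MeasureTheory SchwartzMap Metric Set
open scoped Pointwise RealInnerProductSpace ENNReal NNReal

noncomputable section

/-- Euclidean space `ℝ^d`. -/
abbrev Rd (d : ℕ) : Type := EuclideanSpace ℝ (Fin d)

/-- The space `S*(ℝ^d)` of tempered distributions: continuous linear functionals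
on the Schwartz space `S(ℝ^d)`. -/
abbrev TemperedDist (d : ℕ) : Type := SchwartzMap (Rd d) ℂ →L[ℂ] ℂ

/-- The Fourier transform of a tempered distribution: `f̂(φ) = f(φ̂)`. -/
def fourierTD {d : ℕ} (f : TemperedDist d) : TemperedDist d :=
  f.comp (fourierTransformCLM ℂ)

/-- The support of a tempered distribution: `x ∈ supp f` iff for every open
neighbourhood `U` of `x` there is a smooth compactly supported test function
supported in `U` on which `f` does not vanish. -/
def tdSupport {d : ℕ} (f : TemperedDist d) : Set (Rd d) :=
  {x | ∀ U : Set (Rd d), IsOpen U → x ∈ U →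
    ∃ φ : SchwartzMap (Rd d) ℂ, HasCompactSupport (⇑φ) ∧ tsupport (⇑φ) ⊆ U ∧ f φ ≠ 0}

/-- A set is locally finite if its intersection with every ball is finite. -/
def LocFinite {d : ℕ} (A : Set (Rd d)) : Prop :=
  ∀ (x : Rd d) (r : ℝ), (A ∩ Metric.ball x r).Finite

/-- A set is uniformly discrete if distances between distinct points are
bounded below by a positive constant. -/
def UniformlyDiscrete {d : ℕ} (A : Set (Rd d)) : Prop :=
  ∃ η > (0:ℝ), ∀ x ∈ A, ∀ y ∈ A, x ≠ y → η ≤ dist x y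

/-- A set is polynomially discrete (p-discrete) if
`|x - x'| ≥ c min{1, |x|^{-h}}` for distinct points `x, x'` of the set. -/
def PDiscrete {d : ℕ} (A : Set (Rd d)) : Prop :=
  ∃ c > (0:ℝ), ∃ h > (0:ℝ), ∀ x ∈ A, ∀ y ∈ A, x ≠ y →
    c * (if ‖x‖ ≤ 1 then 1 else ‖x‖ ^ (-h)) ≤ dist x y

/-- A set has bounded density if it is locally finite and the number of its
points in balls of radius 1 is uniformly bounded. -/
def BoundedDensity {d : ℕ} (A : Set (Rd d)) : Prop :=
  LocFinite A ∧ ∃ N : ℕ, ∀ x : Rd d, (A ∩ Metric.ball x 1).ncard ≤ N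

/-- A set is relatively dense if it intersects every ball of some fixed radius `R`. -/
def RelDense {d : ℕ} (A : Set (Rd d)) : Prop :=
  ∃ R : ℝ, 0 < R ∧ ∀ x : Rd d, ∃ a ∈ A, dist x a ≤ R

/-- A full-rank lattice in `ℝ^d` is the image of `ℤ^d` under an invertible
linear operator. -/
def IsFullRankLattice {d : ℕ} (L : Set (Rd d)) : Prop :=
  ∃ T : Rd d →ₗ[ℝ] Rd d, Function.Bijective T ∧
    L = T '' {x : Rd d | ∀ i, ∃ n : ℤ, x i = (n : ℝ)}

/-- The multi-indices `k ∈ (ℕ ∪ {0})^d` with `‖k‖ = k₁ + ⋯ + k_d ≤ K`. -/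
def mIdx (d K : ℕ) : Finset (Fin d → ℕ) :=
  (Finset.Iic fun _ => K).filter fun k => (∑ i, k i) ≤ K

/-- Partial derivative in the `i`-th coordinate direction. -/
def pderiv' {d : ℕ} (i : Fin d) (φ : Rd d → ℂ) : Rd d → ℂ :=
  fun x => fderiv ℝ φ x (EuclideanSpace.single i (1:ℝ))

/-- The mixed partial derivative `D^k = ∂^{k₁}_{x₁} ⋯ ∂^{k_d}_{x_d}`. -/
def Dmulti {d : ℕ} (k : Fin d → ℕ) : (Rd d → ℂ) → (Rd d → ℂ) :=
  ((List.finRange d).map fun i => (pderiv' i)^[k i]).foldr (· ∘ ·) id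

/-- The action of `D^k δ_λ` on a test function: `φ ↦ (-1)^{‖k‖} (D^k φ)(λ)`. -/
def dkDelta {d : ℕ} (k : Fin d → ℕ) (lam : Rd d) (φ : SchwartzMap (Rd d) ℂ) : ℂ :=
  (-1 : ℂ) ^ (∑ i, k i) * Dmulti k (⇑φ) lam

/-- The exponential `e^{2πi⟨x,w⟩}`. -/
def e2pi {d : ℕ} (x w : Rd d) : ℂ :=
  Complex.exp (((2 * Real.pi : ℝ) : ℂ) * Complex.I * ((⟪x, w⟫ : ℝ) : ℂ))

/-- A trigonometric polynomial: a finite sum `Σ c_ω e^{2πi⟨x,ω⟩}`. -/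
def IsTrigPoly {d : ℕ} (P : Rd d → ℂ) : Prop :=
  ∃ (n : ℕ) (cc : Fin n → ℂ) (w : Fin n → Rd d),
    ∀ x, P x = ∑ i, cc i * e2pi x (w i)

/-- The monomial `x^m = x₁^{m₁} ⋯ x_d^{m_d}` (as a complex number). -/
def monom {d : ℕ} (m : Fin d → ℕ) (x : Rd d) : ℂ := ((∏ i, (x i) ^ (m i) : ℝ) : ℂ)

/-- The total variation of the pure point measure with masses `b` on the open
ball `B(0,r)`: `Σ_{|γ| < r} |b(γ)|` (as an extended nonnegative real). -/
def ballVar {d : ℕ} (b : Rd d → ℂ) (r : ℝ) : ℝ≥0∞ :=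
  ∑' γ : Rd d, if ‖γ‖ < r then (‖b γ‖₊ : ℝ≥0∞) else 0

/-- The pure point measure `μ = Σ_λ a(λ) δ_λ` belongs to `S*(ℝ^d)` and is
represented there by the tempered distribution `f`: its support is countable,
`Σ_λ |a(λ)| |φ(λ)| < ∞` for every Schwartz function `φ`, and the (automatically
continuous) functional `φ ↦ Σ_λ a(λ) φ(λ)` coincides with `f`. -/
def RepMeasure {d : ℕ} (a : Rd d → ℂ) (f : TemperedDist d) : Prop :=
  {x | a x ≠ 0}.Countable ∧
  (∀ φ : SchwartzMap (Rd d) ℂ, Summable fun lam => ‖a lam‖ * ‖φ lam‖) ∧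
  (∀ φ : SchwartzMap (Rd d) ℂ, f φ = ∑' lam, a lam * φ lam)

/-- A continuous function on `ℝ^d` is almost periodic if for every `ε > 0` its
set of `ε`-almost periods is relatively dense. -/
def APFunction {d : ℕ} (g : Rd d → ℂ) : Prop :=
  Continuous g ∧ ∀ ε > (0:ℝ), RelDense {τ : Rd d | ∀ t, ‖g (t + τ) - g t‖ < ε}

/-- A tempered distribution is almost periodic if for every smooth compactly
supported `ψ` the function `t ↦ f(ψ(t - ·))` is almost periodic. -/
def APDistribution {d : ℕ} (f : TemperedDist d) : Prop :=
  ∀ ψ : Rd d → ℂ, ContDiff ℝ (⊤ : ℕ∞) ψ → HasCompactSupport ψ →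
    ∀ Φ : Rd d → SchwartzMap (Rd d) ℂ, (∀ t y, Φ t y = ψ (t - y)) →
      APFunction fun t => f (Φ t)

/-!
Points of `A ∩ B(0, r)` are pairwise at distance at least `δ = c r^{-h}` when `r ≥ 1`, so the balls
of radius `δ / 2` around them are disjoint and lie in `B(0, r + δ / 2)`. Comparing volumes leaves
room for at most `(1 + 2 r / δ) ^ d = (1 + (2 / c) r^{h + 1}) ^ d` of them, and the summand `1` is
absorbed because `r^{h + 1} ≥ 1`.
-/

/-- Polynomial discreteness of `A` with constants `c` and `h`: distinct points `x, y ∈ A` satisfy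
`|x - y| ≥ c min{1, |x|^{-h}}`. The case distinction replaces the minimum because Lean's value
`0 ^ (-h) = 0` for `h ≠ 0` would make the condition void at `x = 0`. -/
def PDiscreteWith {E : Type*} [SeminormedAddCommGroup E] (c h : ℝ) (A : Set E) : Prop :=
  A.Pairwise fun x y => c * (if ‖x‖ ≤ 1 then 1 else ‖x‖ ^ (-h)) ≤ dist x y

theorem rpow_neg_le_ite_rpow_neg {t r h : ℝ} (hr : 1 ≤ r) (htr : t ≤ r) (hh : 0 ≤ h) :
    r ^ (-h) ≤ if t ≤ 1 then 1 else t ^ (-h) := by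
  split_ifs with ht
  · exact Real.rpow_le_one_of_one_le_of_nonpos hr (neg_nonpos.2 hh)
  · exact Real.rpow_le_rpow_of_nonpos (by linarith) htr (neg_nonpos.2 hh)

theorem PDiscreteWith.pairwise_inter_ball {E : Type*} [SeminormedAddCommGroup E] {A : Set E}
    {c h r : ℝ} (hA : PDiscreteWith c h A) (hc : 0 ≤ c) (hh : 0 ≤ h) (hr : 1 ≤ r) :
    (A ∩ ball 0 r).Pairwise fun x y => c * r ^ (-h) ≤ dist x y := by
  intro x hx y hy hxy
  have hxr : ‖x‖ ≤ r := (mem_ball_zero_iff.1 hx.2).le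
  exact (mul_le_mul_of_nonneg_left (rpow_neg_le_ite_rpow_neg hr hxr hh) hc).trans
    (hA hx.1 hy.1 hxy)

theorem finite_and_ncard_le_of_encard_le_ofReal {α : Type*} {s : Set α} {t : ℝ} (ht : 0 ≤ t)
    (hs : (s.encard : ℝ≥0∞) ≤ ENNReal.ofReal t) : s.Finite ∧ (s.ncard : ℝ) ≤ t := by
  have hfin : s.Finite := by
    rw [← encard_lt_top_iff, ← ENat.toENNReal_lt_top]
    exact hs.trans_lt ENNReal.ofReal_lt_top
  refine ⟨hfin, ?_⟩
  rwa [← hfin.cast_ncard_eq, ENat.toENNReal_coe, ← ENNReal.ofReal_natCast,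
    ENNReal.ofReal_le_ofReal_iff ht] at hs

section Packing

variable {E : Type*} [NormedAddCommGroup E] {s : Set E} {x : E} {r δ : ℝ}

theorem encard_mul_addHaar_ball_le [MeasurableSpace E] [BorelSpace E] (μ : Measure E)
    [μ.IsAddHaarMeasure] (hsr : s ⊆ ball x r) (hsep : s.Pairwise fun y z => δ ≤ dist y z) :
    s.encard * μ (ball 0 (δ / 2)) ≤ μ (ball x (r + δ / 2)) := by
  have hdisj : Pairwise (Function.onFun Disjoint fun y : s => ball (y : E) (δ / 2)) :=
    fun y z hyz => ball_disjoint_ball <| by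
      rw [add_halves]
      exact hsep y.2 z.2 (Subtype.coe_ne_coe.2 hyz)
  have hsub : ⋃ y : s, ball (y : E) (δ / 2) ⊆ ball x (r + δ / 2) :=
    iUnion_subset fun y => ball_subset_ball' (by linarith [mem_ball.1 (hsr y.2)])
  calc s.encard * μ (ball 0 (δ / 2)) = ∑' y : s, μ (ball (y : E) (δ / 2)) := by
        simp only [Measure.addHaar_ball_center, ENNReal.tsum_set_const]
    _ ≤ μ (⋃ y : s, ball (y : E) (δ / 2)) :=
        tsum_meas_le_meas_iUnion_of_disjoint μ (fun _ => measurableSet_ball) hdisj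
    _ ≤ μ (ball x (r + δ / 2)) := measure_mono hsub

theorem encard_le_of_subset_ball_of_pairwise_le_dist [NormedSpace ℝ E] [FiniteDimensional ℝ E]
    (hδ : 0 < δ) (hr : 0 ≤ r) (hsr : s ⊆ ball x r) (hsep : s.Pairwise fun y z => δ ≤ dist y z) :
    (s.encard : ℝ≥0∞) ≤ ENNReal.ofReal ((1 + 2 * r / δ) ^ Module.finrank ℝ E) := by
  borelize E
  let μ : Measure E := Measure.addHaar
  have hradius : r + δ / 2 = (1 + 2 * r / δ) * (δ / 2) := by field_simp; ring
  have hvol := encard_mul_addHaar_ball_le μ hsr hsep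
  rw [hradius, Measure.addHaar_ball_mul_of_pos μ x (by positivity)] at hvol
  exact (ENNReal.mul_le_mul_iff_left (measure_ball_pos μ 0 (half_pos hδ)).ne'
    measure_ball_lt_top.ne).1 hvol

end Packing

theorem one_add_two_mul_div_mul_rpow_neg_le {c h r : ℝ} (hh : -1 ≤ h) (hr : 1 ≤ r) :
    1 + 2 * r / (c * r ^ (-h)) ≤ (1 + 2 / c) * r ^ (h + 1) := by
  have hr₀ : 0 < r := by linarith
  have hone : 1 ≤ r ^ (h + 1) := Real.one_le_rpow hr (by linarith)
  calc 1 + 2 * r / (c * r ^ (-h)) = 1 + 2 / c * r ^ (h + 1) := by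
        rw [Real.rpow_neg hr₀.le, Real.rpow_add_one hr₀.ne', ← div_eq_mul_inv, div_div_eq_mul_div]
        ring
    _ ≤ (1 + 2 / c) * r ^ (h + 1) := by linarith

theorem statement2_general {E : Type*} [NormedAddCommGroup E] [NormedSpace ℝ E]
    [FiniteDimensional ℝ E] {A : Set E} {c h r : ℝ} (hc : 0 < c) (hh : 0 ≤ h)
    (hA : PDiscreteWith c h A) (hr : 1 ≤ r) :
    (A ∩ ball 0 r).Finite ∧
      ((A ∩ ball 0 r).ncard : ℝ) ≤
        (1 + 2 / c) ^ Module.finrank ℝ E * r ^ ((Module.finrank ℝ E : ℝ) * (h + 1)) := by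
  have hr₀ : 0 < r := by linarith
  have hδ : 0 < c * r ^ (-h) := by positivity
  have hpack := encard_le_of_subset_ball_of_pairwise_le_dist hδ hr₀.le inter_subset_right
    (hA.pairwise_inter_ball hc.le hh hr)
  obtain ⟨hfin, hcard⟩ := finite_and_ncard_le_of_encard_le_ofReal (by positivity) hpack
  refine ⟨hfin, hcard.trans ?_⟩
  calc (1 + 2 * r / (c * r ^ (-h))) ^ Module.finrank ℝ E
      ≤ ((1 + 2 / c) * r ^ (h + 1)) ^ Module.finrank ℝ E :=
        pow_le_pow_left₀ (by positivity) (one_add_two_mul_div_mul_rpow_neg_le (by linarith) hr) _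
    _ = (1 + 2 / c) ^ Module.finrank ℝ E * r ^ ((Module.finrank ℝ E : ℝ) * (h + 1)) := by
        rw [mul_pow, mul_comm (Module.finrank ℝ E : ℝ), Real.rpow_mul_natCast hr₀.le]

/-- If `A ⊆ ℝ^d` is polynomially discrete with constants
`c, h > 0`, then there is `C < ∞` such that `#(A ∩ B(0,r)) ≤ C r^{d(h+1)}`
for all `r ≥ 1`. -/
theorem statement2 {d : ℕ} (A : Set (Rd d)) (c h : ℝ) (hc : 0 < c) (hh : 0 < h)
    (hA : ∀ x ∈ A, ∀ y ∈ A, x ≠ y →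
      c * (if ‖x‖ ≤ 1 then 1 else ‖x‖ ^ (-h)) ≤ dist x y) :
    ∃ C : ℝ, ∀ r : ℝ, 1 ≤ r →
      (A ∩ Metric.ball 0 r).Finite ∧
      ((A ∩ Metric.ball 0 r).ncard : ℝ) ≤ C * r ^ ((d : ℝ) * (h + 1)) := by
  have hpd : PDiscreteWith c h A := fun x hx y hy => hA x hx y hy
  exact ⟨(1 + 2 / c) ^ d, fun r hr => by simpa using statement2_general hc hh.le hpd hr⟩
end
end

section
/- Let μ_1, …, μ_S be purely point measures on ℝ^d belonging to S*(ℝ^d) with uniformly discrete supports Λ_1, …, Λ_S. Suppose that each Fourier transform μ̂_s is a purely point measure satisfying |μ̂_s|(B(0,r)) = O(r^d) as r → ∞, and that inf_{λ ∈ Λ_1 ∪ ⋯ ∪ Λ_S} Σ_{s=1}^S |μ_s(λ)| > 0 (where μ_s(λ) := 0 if λ ∉ Λ_s). Then each Λ_s is contained in a finite union of translates of full-rank lattices. -/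
open MeasureTheory SchwartzMap Metric Set
open scoped Pointwise RealInnerProductSpace ENNReal NNReal

noncomputable section

/-!
The masses of all the measures together are matrix coefficients of a unitary representation of
`ℝ^d`. Testing `μ_s` against `χ((· - x) / ε)` for a bump function `χ` gives, for all small `ε`,
`μ_s(x) = ∑ γ, μ̂_s(γ) ε^d χ̌(εγ) e^{2πi⟨x,γ⟩}`, and the growth condition on `μ̂_s` bounds the
`ℓ¹` norms of the weights `μ̂_s(γ) ε^d χ̌(εγ)` uniformly in `ε`. A limit functional of these
weights on bounded continuous functions is dominated by a positive functional `ρ`, a limit of the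
absolute values of the weights. In the GNS space of `ρ` the characters act unitarily and
`μ_s(x) = ⟪ξ, U x ζ_s⟫`.

Let `Λ` be the union of the supports. If `Λ` is not covered by finitely many cosets of subgroups
all of whose finite subsets have translates inside `Λ`, then some ultrafilter contains `Λ` and
none of these cosets. Among the weak limits of `U(-t) ξ` along such ultrafilters choose one, `v`,
of minimal norm. Weak limits of `U(-y) v` along the support `Q` of the coefficients of `v` are
again of this kind. Hence their norms do not drop, the convergence is strong, and as the
coefficients are bounded away from zero on their support, the translates of `Q` eventually
coincide. So `Q` is covered by finitely many cosets of its stabilizer, which embeds finitely into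
`Λ`. The ultrafilter avoids these cosets, so the coefficients of `U(t) v` tend to zero pointwise.
As `ξ` may be taken in the closed span of the `U x ζ_s`, this forces `v = 0`, contradicting
`0 ∈ Q`.

By the pigeonhole principle, a subgroup embedding finitely into a finite union of uniformly
discrete sets has finitely many elements near `0`. It is therefore discrete and lies in a
full-rank lattice.
-/

universe u

section UltrafilterCompactness

open Filter

theorem exists_finite_subcover_of_forall_ultrafilter {α : Type*} {A : Set α} {T : Set (Set α)}
    (h : ∀ u : Ultrafilter α, A ∈ u → ∃ B ∈ T, B ∈ u) :
    ∃ C ⊆ T, C.Finite ∧ A ⊆ ⋃₀ C := by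
  have hcover : {u : Ultrafilter α | A ∈ u} ⊆ ⋃ B ∈ T, {u : Ultrafilter α | B ∈ u} := by
    intro u hu
    simpa using h u hu
  obtain ⟨C, hCT, hC, hAC⟩ := (ultrafilter_isClosed_basic A).isCompact.elim_finite_subcover_image
    (fun B _ => ultrafilter_isOpen_basic B) hcover
  refine ⟨C, hCT, hC, fun x hx => ?_⟩
  simpa using hAC (mem_ofPred.mpr (Ultrafilter.mem_pure.mpr hx))

/-- The ultrafilters on `α` that contain `A` but no member of `T`. -/
def ultrafiltersAvoiding {α : Type*} (A : Set α) (T : Set (Set α)) : Set (Ultrafilter α) :=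
  {u | A ∈ u ∧ ∀ B ∈ T, B ∉ u}

theorem bind_mem_ultrafiltersAvoiding {α ι : Type*} {A : Set α} {T : Set (Set α)}
    {p : Ultrafilter ι} {u : ι → Ultrafilter α}
    (h : ∀ᶠ i in (p : Filter ι), u i ∈ ultrafiltersAvoiding A T) :
    p.bind u ∈ ultrafiltersAvoiding A T := by
  refine ⟨h.mono fun i hi => hi.1, fun B hB hBu => ?_⟩
  obtain ⟨i, hi, hBi⟩ := (h.and (show ∀ᶠ i in (p : Filter ι), B ∈ u i from hBu)).exists
  exact hi.2 B hB hBi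

end UltrafilterCompactness

section WeakConvergence

open Filter Topology

variable {𝕜 : Type*} [RCLike 𝕜]

theorem exists_strongDual_tendsto_of_norm_le {E : Type*} [SeminormedAddCommGroup E]
    [NormedSpace 𝕜 E] {ι : Type*} (u : Ultrafilter ι) {φ : ι → StrongDual 𝕜 E} {C : ℝ}
    (hφ : ∀ i, ‖φ i‖ ≤ C) :
    ∃ ψ : StrongDual 𝕜 E, ∀ x, Tendsto (fun i => φ i x) u (𝓝 (ψ x)) := by
  have hball : ∀ᶠ i in (u : Filter ι), StrongDual.toWeakDual (φ i) ∈
      WeakDual.toStrongDual ⁻¹' closedBall (0 : StrongDual 𝕜 E) C :=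
    .of_forall fun i => by simpa using hφ i
  obtain ⟨ψ, -, hψ⟩ := (WeakDual.isCompact_closedBall (0 : StrongDual 𝕜 E) C).ultrafilter_le_nhds'
    (u.map fun i => StrongDual.toWeakDual (φ i)) hball
  exact ⟨WeakDual.toStrongDual ψ, fun x => ((WeakDual.eval_continuous x).tendsto ψ).comp hψ⟩

variable {𝓗 : Type*} [NormedAddCommGroup 𝓗] [InnerProductSpace 𝕜 𝓗] {ι : Type*}

variable (𝕜) in
/-- Weak convergence of `f` to `v` along `l` in an inner product space, tested on vectors. -/
def WeakTendsto (f : ι → 𝓗) (l : Filter ι) (v : 𝓗) : Prop :=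
  ∀ η, Tendsto (fun i => inner 𝕜 η (f i)) l (𝓝 (inner 𝕜 η v))

theorem exists_weakTendsto_of_norm_le [CompleteSpace 𝓗] (u : Ultrafilter ι) {f : ι → 𝓗} {C : ℝ}
    (hf : ∀ i, ‖f i‖ ≤ C) : ∃ v, WeakTendsto 𝕜 f u v := by
  obtain ⟨ψ, hψ⟩ := exists_strongDual_tendsto_of_norm_le u
    (φ := fun i => InnerProductSpace.toDual 𝕜 𝓗 (f i)) (C := C) (by simpa using hf)
  refine ⟨(InnerProductSpace.toDual 𝕜 𝓗).symm ψ, fun η => ?_⟩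
  have hconj := (RCLike.continuous_conj.tendsto (ψ η)).comp (hψ η)
  simpa only [Function.comp_def, inner_conj_symm, LinearIsometryEquiv.symm_apply_apply,
    ← InnerProductSpace.toDual_symm_apply] using hconj

namespace WeakTendsto

variable {f : ι → 𝓗} {v : 𝓗}

theorem norm_le {l : Filter ι} [l.NeBot] {R : ℝ} (h : WeakTendsto 𝕜 f l v)
    (hR : Tendsto (fun i => ‖f i‖) l (𝓝 R)) : ‖v‖ ≤ R := by
  have hR0 : 0 ≤ R := ge_of_tendsto hR (.of_forall fun i => norm_nonneg _)
  have hsq : ‖v‖ * ‖v‖ ≤ ‖v‖ * R := by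
    rw [← inner_self_eq_norm_mul_norm (𝕜 := 𝕜), inner_self_re_eq_norm]
    exact le_of_tendsto_of_tendsto (h v).norm (hR.const_mul ‖v‖)
      (.of_forall fun i => norm_inner_le_norm v (f i))
  rcases (norm_nonneg v).eq_or_lt with hv | hv
  · rwa [← hv]
  · exact le_of_mul_le_mul_left hsq hv

theorem tendsto_of_norm {l : Filter ι} (h : WeakTendsto 𝕜 f l v)
    (hnorm : Tendsto (fun i => ‖f i‖) l (𝓝 ‖v‖)) : Tendsto f l (𝓝 v) := by
  have hre : Tendsto (fun i => RCLike.re (inner 𝕜 (f i) v)) l (𝓝 (‖v‖ ^ 2)) := by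
    simpa only [inner_re_symm v, inner_self_eq_norm_sq, Function.comp_def] using
      (RCLike.continuous_re.tendsto _).comp (h v)
  have hsq : Tendsto (fun i => ‖f i - v‖ ^ 2) l (𝓝 0) := by
    simp only [norm_sub_sq (𝕜 := 𝕜)]
    convert ((hnorm.pow 2).sub (hre.const_mul 2)).add_const (‖v‖ ^ 2) using 2
    ring
  rw [tendsto_iff_norm_sub_tendsto_zero]
  simpa using hsq.sqrt

theorem map_linearIsometryEquiv {l : Filter ι} (h : WeakTendsto 𝕜 f l v) (V : 𝓗 ≃ₗᵢ[𝕜] 𝓗) :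
    WeakTendsto 𝕜 (fun i => V (f i)) l (V v) := fun η => by
  simpa only [V.symm.inner_map_eq_flip, V.symm_symm] using h (V.symm η)

theorem bind {κ : Type*} {p : Ultrafilter κ} {u : κ → Ultrafilter ι} {g : κ → 𝓗}
    (hg : WeakTendsto 𝕜 g p v) (hu : ∀ᶠ k in (p : Filter κ), WeakTendsto 𝕜 f (u k) (g k)) :
    WeakTendsto 𝕜 f (p.bind u) v := fun η => by
  intro W hW
  obtain ⟨O, hOW, hO, hvO⟩ := _root_.mem_nhds_iff.mp hW
  change ∀ᶠ k in (p : Filter κ), ∀ᶠ i in (u k : Filter ι), inner 𝕜 η (f i) ∈ W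
  filter_upwards [hu, hg η (hO.mem_nhds hvO)] with k hk hkO
  exact mem_of_superset (hk η (hO.mem_nhds hkO)) (preimage_mono hOW)

end WeakTendsto

variable (𝕜) in
/-- The weak limits of `f` along the ultrafilters of a given set. -/
def weakLimits (𝓤 : Set (Ultrafilter ι)) (f : ι → 𝓗) : Set 𝓗 :=
  {v | ∃ u ∈ 𝓤, WeakTendsto 𝕜 f u v}

theorem mem_weakLimits_of_weakTendsto {κ : Type*} {p : Ultrafilter κ} {A : Set ι} {T : Set (Set ι)}
    {f : ι → 𝓗} {g : κ → 𝓗} {w : 𝓗}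
    (hg : ∀ᶠ k in (p : Filter κ), g k ∈ weakLimits 𝕜 (ultrafiltersAvoiding A T) f)
    (hw : WeakTendsto 𝕜 g p w) : w ∈ weakLimits 𝕜 (ultrafiltersAvoiding A T) f := by
  obtain ⟨u, hu⟩ := hg.choice
  exact ⟨p.bind u, bind_mem_ultrafiltersAvoiding (hu.mono fun k hk => hk.1),
    hw.bind (hu.mono fun k hk => hk.2)⟩

theorem exists_norm_minimal_weakLimits [CompleteSpace 𝓗] {A : Set ι} {T : Set (Set ι)} {f : ι → 𝓗}
    {R : ℝ} (hne : (ultrafiltersAvoiding A T).Nonempty) (hf : ∀ i, ‖f i‖ ≤ R) :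
    ∃ v ∈ weakLimits 𝕜 (ultrafiltersAvoiding A T) f,
      ∀ w ∈ weakLimits 𝕜 (ultrafiltersAvoiding A T) f, ‖v‖ ≤ ‖w‖ := by
  set K := weakLimits 𝕜 (ultrafiltersAvoiding A T) f
  have hKne : K.Nonempty :=
    let ⟨u, hu⟩ := hne
    let ⟨v, hv⟩ := exists_weakTendsto_of_norm_le (𝕜 := 𝕜) u hf
    ⟨v, u, hu, hv⟩
  have hbelow : BddBelow (norm '' K) := ⟨0, forall_mem_image.mpr fun v _ => norm_nonneg v⟩
  obtain ⟨m, hanti, hm, hmK⟩ := exists_seq_tendsto_sInf (hKne.image norm) hbelow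
  choose g hgK hgm using hmK
  obtain ⟨v, hv⟩ := exists_weakTendsto_of_norm_le (𝕜 := 𝕜) (hyperfilter ℕ) fun n =>
    (hgm n).trans_le (hanti n.zero_le)
  refine ⟨v, mem_weakLimits_of_weakTendsto (.of_forall hgK) hv, fun w hw => ?_⟩
  have hlim : Tendsto (fun n => ‖g n‖) (hyperfilter ℕ) (𝓝 (sInf (norm '' K))) := by
    simp only [hgm]
    exact hm.mono_left (Nat.hyperfilter_le_atTop)
  exact (hv.norm_le hlim).trans (csInf_le hbelow (mem_image_of_mem norm hw))

end WeakConvergence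

section UnitaryRepresentations

open Filter Topology Function

variable {G : Type*} [Group G]

/-- Finite embeddability of sets in a group: every finite part of `A` has a translate inside `B`. -/
def FinitelyEmbeddable (A B : Set G) : Prop :=
  ∀ F : Finset G, (F : Set G) ⊆ A → ∃ t, ∀ x ∈ F, t * x ∈ B

theorem FinitelyEmbeddable.mono_left {A A' B : Set G} (h : FinitelyEmbeddable A B) (hA : A' ⊆ A) :
    FinitelyEmbeddable A' B :=
  fun F hF => h F (hF.trans hA)

/-- The two-sided translates of the subgroups that are finitely embeddable in `A`. -/
def embeddedCosets (A : Set G) : Set (Set G) :=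
  {B | ∃ H : Subgroup G, FinitelyEmbeddable (H : Set G) A ∧ ∃ a b, B = {x | a * x * b ∈ H}}

theorem map_mul_right_mem_ultrafiltersAvoiding {A : Set G} {u : Ultrafilter G} {y : G}
    (hu : u ∈ ultrafiltersAvoiding A (embeddedCosets A)) (hy : ∀ᶠ t in (u : Filter G), t * y ∈ A) :
    u.map (· * y) ∈ ultrafiltersAvoiding A (embeddedCosets A) := by
  refine ⟨hy, ?_⟩
  rintro _ ⟨H, hH, a, b, rfl⟩ hB
  refine hu.2 {x | a * x * (y * b) ∈ H} ⟨H, hH, a, y * b, rfl⟩ ?_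
  filter_upwards [Ultrafilter.mem_map.mp hB] with x hx
  simpa only [mem_preimage, mem_ofPred_eq, mul_assoc] using hx

variable {𝕜 𝓗 σ : Type*} [RCLike 𝕜] [NormedAddCommGroup 𝓗] [InnerProductSpace 𝕜 𝓗] [Fintype σ]
  (U : G →* (𝓗 ≃ₗᵢ[𝕜] 𝓗)) (ζ : σ → 𝓗)

/-- Total size at `x` of the matrix coefficients of `ξ` against the vectors `ζ`. -/
def coeffMass (ξ : 𝓗) (x : G) : ℝ :=
  ∑ s, ‖inner 𝕜 (U x (ζ s)) ξ‖

theorem coeffMass_eq_zero_iff {ξ : 𝓗} {x : G} :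
    coeffMass U ζ ξ x = 0 ↔ ∀ s, inner 𝕜 (U x (ζ s)) ξ = 0 := by
  simp [coeffMass, Finset.sum_eq_zero_iff_of_nonneg]

theorem inner_unitary_eq_inner_inv (x : G) (η θ : 𝓗) :
    inner 𝕜 (U x η) θ = inner 𝕜 η (U x⁻¹ θ) := by
  rw [map_inv, LinearIsometryEquiv.inner_map_eq_flip]
  rfl

theorem coeffMass_inv_apply (ξ : 𝓗) (y x : G) :
    coeffMass U ζ (U y⁻¹ ξ) x = coeffMass U ζ ξ (y * x) := by
  simp only [coeffMass, ← inner_unitary_eq_inner_inv, map_mul, LinearIsometryEquiv.coe_mul,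
    comp_apply]

theorem support_coeffMass_inv_apply (ξ : 𝓗) (y : G) :
    support (coeffMass U ζ (U y⁻¹ ξ)) = y⁻¹ • support (coeffMass U ζ ξ) := by
  ext x
  simp only [mem_support, mem_smul_set_iff_inv_smul_mem, inv_inv, smul_eq_mul,
    coeffMass_inv_apply]

theorem abs_coeffMass_sub_le (ξ η : 𝓗) (x : G) :
    |coeffMass U ζ ξ x - coeffMass U ζ η x| ≤ (∑ s, ‖ζ s‖) * ‖ξ - η‖ := by
  rw [coeffMass, coeffMass, ← Finset.sum_sub_distrib, Finset.sum_mul]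
  refine (Finset.abs_sum_le_sum_abs _ _).trans (Finset.sum_le_sum fun s _ => ?_)
  calc |‖inner 𝕜 (U x (ζ s)) ξ‖ - ‖inner 𝕜 (U x (ζ s)) η‖|
      ≤ ‖inner 𝕜 (U x (ζ s)) (ξ - η)‖ := by
        rw [inner_sub_right]
        exact abs_norm_sub_norm_le _ _
    _ ≤ ‖ζ s‖ * ‖ξ - η‖ := by
        simpa using norm_inner_le_norm (𝕜 := 𝕜) (U x (ζ s)) (ξ - η)

/-- The coefficient mass of `ξ` is at least `c` wherever it does not vanish. -/
def HasCoeffGap (c : ℝ) (ξ : 𝓗) : Prop :=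
  ∀ x, coeffMass U ζ ξ x ≠ 0 → c ≤ coeffMass U ζ ξ x

variable {U ζ}

theorem WeakTendsto.coeffMass {ι : Type*} {l : Filter ι} {f : ι → 𝓗} {v : 𝓗}
    (h : WeakTendsto 𝕜 f l v) (x : G) :
    Tendsto (fun i => coeffMass U ζ (f i) x) l (𝓝 (coeffMass U ζ v x)) :=
  tendsto_finsetSum _ fun s _ => (h (U x (ζ s))).norm

namespace HasCoeffGap

variable {c : ℝ} {ξ η : 𝓗}

theorem inv_apply (h : HasCoeffGap U ζ c ξ) (y : G) : HasCoeffGap U ζ c (U y⁻¹ ξ) := fun x => by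
  simpa only [coeffMass_inv_apply] using h (y * x)

theorem of_weakTendsto {ι : Type*} {l : Filter ι} [l.NeBot] {f : ι → 𝓗}
    (hf : ∀ i, HasCoeffGap U ζ c (f i)) (hξ : WeakTendsto 𝕜 f l ξ) : HasCoeffGap U ζ c ξ := by
  intro x hx
  have hlim := hξ.coeffMass (U := U) (ζ := ζ) x
  refine ge_of_tendsto hlim ?_
  filter_upwards [hlim.eventually_ne hx] with i hi using hf i x hi

theorem support_subset_of_norm_sub_lt (hξ : HasCoeffGap U ζ c ξ)
    (hlt : (∑ s, ‖ζ s‖) * ‖ξ - η‖ < c) :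
    support (coeffMass U ζ ξ) ⊆ support (coeffMass U ζ η) := by
  intro x hx hη
  have hle := (le_abs_self _).trans (abs_coeffMass_sub_le U ζ ξ η x)
  linarith [hξ x hx]

theorem mul_inv_mem_stabilizer (hξ : HasCoeffGap U ζ c ξ) {y z : G}
    (hlt : (∑ s, ‖ζ s‖) * ‖U y⁻¹ ξ - U z⁻¹ ξ‖ < c) :
    z * y⁻¹ ∈ MulAction.stabilizer G (support (_root_.coeffMass U ζ ξ)) := by
  have hyz := (hξ.inv_apply y).support_subset_of_norm_sub_lt hlt
  have hzy := (hξ.inv_apply z).support_subset_of_norm_sub_lt (norm_sub_rev (U y⁻¹ ξ) _ ▸ hlt)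
  have heq := hyz.antisymm hzy
  rw [support_coeffMass_inv_apply, support_coeffMass_inv_apply] at heq
  rw [MulAction.mem_stabilizer_iff, mul_smul, heq, smul_inv_smul]

end HasCoeffGap

section OrbitLimits

variable {c : ℝ} {ξ v : 𝓗} {u : Ultrafilter G}

theorem eventually_mul_mem_support_coeffMass
    (hv : WeakTendsto 𝕜 (fun t => U t⁻¹ ξ) u v) {x : G} (hx : x ∈ support (coeffMass U ζ v)) :
    ∀ᶠ t in (u : Filter G), t * x ∈ support (coeffMass U ζ ξ) := by
  filter_upwards [(hv.coeffMass x).eventually_ne hx] with t ht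
  rwa [mem_support, ← coeffMass_inv_apply]

theorem finitelyEmbeddable_support_coeffMass (hv : WeakTendsto 𝕜 (fun t => U t⁻¹ ξ) u v) :
    FinitelyEmbeddable (support (coeffMass U ζ v)) (support (coeffMass U ζ ξ)) := fun F hF =>
  ((Finset.eventually_all F).mpr fun _ hx =>
    eventually_mul_mem_support_coeffMass hv (hF hx)).exists

theorem one_mem_support_coeffMass (hc : 0 < c) (hξ : HasCoeffGap U ζ c ξ)
    (hu : support (coeffMass U ζ ξ) ∈ u) (hv : WeakTendsto 𝕜 (fun t => U t⁻¹ ξ) u v) :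
    1 ∈ support (coeffMass U ζ v) := by
  have hle : c ≤ coeffMass U ζ v 1 := by
    refine ge_of_tendsto (hv.coeffMass 1) ?_
    filter_upwards [hu] with t ht
    rw [coeffMass_inv_apply, mul_one]
    exact hξ t ht
  exact (hc.trans_le hle).ne'

theorem stabilizer_subset_of_one_mem {Q : Set G} (h : 1 ∈ Q) :
    (MulAction.stabilizer G Q : Set G) ⊆ Q := fun x hx => by
  simpa [MulAction.mem_stabilizer_iff.mp hx] using smul_mem_smul_set (a := x) h

theorem inv_apply_mem_weakLimits
    (hu : u ∈ ultrafiltersAvoiding (support (coeffMass U ζ ξ))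
      (embeddedCosets (support (coeffMass U ζ ξ))))
    (hv : WeakTendsto 𝕜 (fun t => U t⁻¹ ξ) u v) {y : G} (hy : y ∈ support (coeffMass U ζ v)) :
    U y⁻¹ v ∈ weakLimits 𝕜 (ultrafiltersAvoiding (support (coeffMass U ζ ξ))
      (embeddedCosets (support (coeffMass U ζ ξ)))) fun t => U t⁻¹ ξ := by
  refine ⟨_, map_mul_right_mem_ultrafiltersAvoiding hu
    (eventually_mul_mem_support_coeffMass hv hy), fun η => ?_⟩
  rw [Ultrafilter.coe_map, tendsto_map'_iff]
  refine (hv.map_linearIsometryEquiv (U y⁻¹) η).congr fun t => ?_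
  simp only [comp_apply, mul_inv_rev, map_mul, LinearIsometryEquiv.coe_mul]

/-- Norm minimality upgrades weak to strong convergence of the orbit, and along a strongly
convergent orbit the gap makes the translates of the support coincide. -/
theorem exists_finite_cosets_cover_support [CompleteSpace 𝓗] (hc : 0 < c)
    (hgap : HasCoeffGap U ζ c v)
    (hmin : ∀ (p : Ultrafilter G) (w : 𝓗), support (coeffMass U ζ v) ∈ p →
      WeakTendsto 𝕜 (fun y => U y⁻¹ v) p w → ‖v‖ ≤ ‖w‖) :
    ∃ C ⊆ {B : Set G | ∃ b, B = {x | x * b ∈ MulAction.stabilizer G (support (coeffMass U ζ v))}},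
      C.Finite ∧ support (coeffMass U ζ v) ⊆ ⋃₀ C := by
  refine exists_finite_subcover_of_forall_ultrafilter fun p hp => ?_
  obtain ⟨w, hw⟩ := exists_weakTendsto_of_norm_le (𝕜 := 𝕜) p fun y => (U y⁻¹).norm_map v |>.le
  have hnorm : Tendsto (fun y => ‖U y⁻¹ v‖) p (𝓝 ‖v‖) := by
    simpa only [LinearIsometryEquiv.norm_map] using tendsto_const_nhds
  have hwv : ‖w‖ = ‖v‖ := (hw.norm_le hnorm).antisymm (hmin p w hp hw)
  have hstrong : Tendsto (fun y => U y⁻¹ v) p (𝓝 w) := hw.tendsto_of_norm (hwv ▸ hnorm)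
  have hcauchy : ∀ᶠ yz in (p : Filter G) ×ˢ (p : Filter G),
      (∑ s, ‖ζ s‖) * ‖U yz.1⁻¹ v - U yz.2⁻¹ v‖ < c := by
    have hzero : Tendsto (fun yz : G × G => (∑ s, ‖ζ s‖) * ‖U yz.1⁻¹ v - U yz.2⁻¹ v‖)
        ((p : Filter G) ×ˢ (p : Filter G)) (𝓝 0) := by
      simpa using (((hstrong.comp tendsto_fst).sub (hstrong.comp tendsto_snd)).norm.const_mul
        (∑ s, ‖ζ s‖))
    exact hzero.eventually_lt_const hc
  obtain ⟨y, hy⟩ := hcauchy.curry.exists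
  exact ⟨_, ⟨y⁻¹, rfl⟩, hy.mono fun z hz => hgap.mul_inv_mem_stabilizer hz⟩

theorem eventually_inv_mul_notMem {A Q : Set G} (hu : ∀ B ∈ embeddedCosets A, B ∉ u)
    {H : Subgroup G} (hH : FinitelyEmbeddable (H : Set G) A) {C : Set (Set G)}
    (hCH : C ⊆ {B | ∃ b, B = {x | x * b ∈ H}}) (hC : C.Finite) (hQC : Q ⊆ ⋃₀ C) (x : G) :
    ∀ᶠ t in (u : Filter G), t⁻¹ * x ∉ Q := by
  have hB : ∀ B ∈ C, ∀ᶠ t in (u : Filter G), t⁻¹ * x ∉ B := fun B hB => by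
    obtain ⟨b, rfl⟩ := hCH hB
    have hnot : ∀ᶠ t in (u : Filter G), (x * b)⁻¹ * t * 1 ∉ H :=
      Ultrafilter.eventually_not.mpr (hu _ ⟨H, hH, (x * b)⁻¹, 1, rfl⟩)
    filter_upwards [hnot] with t ht htx
    exact ht (by simpa [mul_assoc] using H.inv_mem htx)
  filter_upwards [(eventually_all_finite hC).mpr hB] with t ht htx
  obtain ⟨B, hB, htB⟩ := hQC htx
  exact ht B hB htB

theorem eq_zero_of_eventually_inv_mul_notMem_support [CompleteSpace 𝓗]
    (hcyc : ∀ w, (∀ x s, inner 𝕜 (U x (ζ s)) w = 0) → inner 𝕜 ξ w = 0)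
    (hv : WeakTendsto 𝕜 (fun t => U t⁻¹ ξ) u v)
    (hvanish : ∀ x, ∀ᶠ t in (u : Filter G), t⁻¹ * x ∉ support (coeffMass U ζ v)) : v = 0 := by
  obtain ⟨w, hw⟩ := exists_weakTendsto_of_norm_le (𝕜 := 𝕜) u fun t => (U t).norm_map v |>.le
  have horth : ∀ x s, inner 𝕜 (U x (ζ s)) w = 0 := fun x s => by
    refine tendsto_nhds_unique (hw (U x (ζ s))) (tendsto_const_nhds.congr' ?_)
    filter_upwards [hvanish x] with t ht
    rw [mem_support, not_not, ← coeffMass_inv_apply, inv_inv] at ht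
    exact ((coeffMass_eq_zero_iff U ζ).mp ht s).symm
  have hlim : Tendsto (fun t => inner 𝕜 v (U t⁻¹ ξ)) u (𝓝 0) := by
    have hconj := (RCLike.continuous_conj.tendsto _).comp (hw ξ)
    rw [hcyc w horth, map_zero] at hconj
    refine hconj.congr fun t => ?_
    rw [← inner_unitary_eq_inner_inv, comp_apply, inner_conj_symm]
  exact inner_self_eq_zero.mp (tendsto_nhds_unique (hv v) hlim)

end OrbitLimits

theorem exists_cyclic_vector_of_inner_eq [CompleteSpace 𝓗] (A : Set 𝓗) (ξ : 𝓗) :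
    ∃ ξ' : 𝓗, (∀ η ∈ A, inner 𝕜 η ξ' = inner 𝕜 η ξ) ∧
      ∀ w, (∀ η ∈ A, inner 𝕜 η w = 0) → inner 𝕜 ξ' w = 0 := by
  set K := (Submodule.span 𝕜 A).topologicalClosure
  refine ⟨K.starProjection ξ, fun η hη => ?_, fun w hw => ?_⟩
  · have hηK : η ∈ K := subset_closure (Submodule.subset_span hη)
    have horth := K.sub_starProjection_mem_orthogonal ξ η hηK
    rw [inner_sub_right, sub_eq_zero] at horth
    exact horth.symm
  · have hspan : Submodule.span 𝕜 A ≤ (𝕜 ∙ w)ᗮ := Submodule.span_le.mpr fun η hη =>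
      Submodule.mem_orthogonal_singleton_iff_inner_left.mpr (hw η hη)
    have hK : K ≤ (𝕜 ∙ w)ᗮ :=
      Submodule.topologicalClosure_minimal _ hspan (Submodule.isClosed_orthogonal _)
    exact Submodule.mem_orthogonal_singleton_iff_inner_left.mp
      (hK (K.starProjection_apply_mem ξ))

theorem exists_finite_embeddedCosets_cover_of_cyclic [CompleteSpace 𝓗] {c : ℝ} {ξ : 𝓗} (hc : 0 < c)
    (hgap : HasCoeffGap U ζ c ξ)
    (hcyc : ∀ w, (∀ x s, inner 𝕜 (U x (ζ s)) w = 0) → inner 𝕜 ξ w = 0) :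
    ∃ C ⊆ embeddedCosets (support (coeffMass U ζ ξ)), C.Finite ∧
      support (coeffMass U ζ ξ) ⊆ ⋃₀ C := by
  refine exists_finite_subcover_of_forall_ultrafilter fun u₀ hu₀ => ?_
  by_contra! havoid
  obtain ⟨v, ⟨u, hu, hv⟩, hmin⟩ := exists_norm_minimal_weakLimits (𝕜 := 𝕜)
    (f := fun t => U t⁻¹ ξ) ⟨u₀, hu₀, havoid⟩ fun t => ((U t⁻¹).norm_map ξ).le
  have hone : 1 ∈ support (coeffMass U ζ v) := one_mem_support_coeffMass hc hgap hu.1 hv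
  have hstab : FinitelyEmbeddable
      (MulAction.stabilizer G (support (coeffMass U ζ v)) : Set G) (support (coeffMass U ζ ξ)) :=
    (finitelyEmbeddable_support_coeffMass hv).mono_left (stabilizer_subset_of_one_mem hone)
  obtain ⟨C, hCH, hC, hcover⟩ := exists_finite_cosets_cover_support hc
    (.of_weakTendsto (fun t => hgap.inv_apply t) hv) fun p w hp hw => hmin w <|
      mem_weakLimits_of_weakTendsto
        (mem_of_superset hp fun y hy => inv_apply_mem_weakLimits hu hv hy) hw
  have hv0 : v = 0 := eq_zero_of_eventually_inv_mul_notMem_support hcyc hv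
    (eventually_inv_mul_notMem hu.2 hstab hCH hC hcover)
  simp [hv0, coeffMass] at hone

theorem exists_finite_embeddedCosets_cover [CompleteSpace 𝓗] {c : ℝ} {ξ : 𝓗} (hc : 0 < c)
    (hgap : HasCoeffGap U ζ c ξ) :
    ∃ C ⊆ embeddedCosets (support (coeffMass U ζ ξ)), C.Finite ∧
      support (coeffMass U ζ ξ) ⊆ ⋃₀ C := by
  obtain ⟨ξ', hinner, hcyc⟩ :=
    exists_cyclic_vector_of_inner_eq (𝕜 := 𝕜) {η | ∃ x s, U x (ζ s) = η} ξ
  have hmass : coeffMass U ζ ξ = coeffMass U ζ ξ' := funext fun x =>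
    Finset.sum_congr rfl fun s _ => by rw [hinner _ ⟨x, s, rfl⟩]
  rw [hmass]
  refine exists_finite_embeddedCosets_cover_of_cyclic hc (fun x => ?_) fun w hw =>
    hcyc w fun η ⟨x, s, hη⟩ => hη ▸ hw x s
  rw [← hmass]
  exact hgap x

end UnitaryRepresentations

section GelfandNaimarkSegal

open scoped ComplexOrder

variable {G A : Type*} [Group G] [CStarAlgebra A] [PartialOrder A] [StarOrderedRing A]

/-- The unitary representation on the GNS space of `ρ` obtained from a homomorphism into the
unitary group of the algebra, acting by left multiplication. -/
def gnsUnitaryRep (ρ : A →ₚ[ℂ] ℂ) (M : G →* unitary A) : G →* (ρ.GNS ≃ₗᵢ[ℂ] ρ.GNS) :=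
  Unitary.linearIsometryEquiv.toMonoidHom.comp
    ((Unitary.map (StarMonoidHom.ofClass ρ.gnsStarAlgHom)).toMonoidHom.comp M)

theorem gnsUnitaryRep_apply_coe (ρ : A →ₚ[ℂ] ℂ) (M : G →* unitary A) (x : G) (a : A) :
    gnsUnitaryRep ρ M x (ρ.toPreGNS a : ρ.GNS) = ρ.toPreGNS (M x * a) :=
  ρ.gnsNonUnitalStarAlgHom_apply_coe

theorem exists_gns_inner_eq (ρ : A →ₚ[ℂ] ℂ) (Φ : A →ₗ[ℂ] ℂ) {C : ℝ} (hC : 0 ≤ C)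
    (hΦ : ∀ a, ‖Φ a‖ ^ 2 ≤ C * (ρ (star a * a)).re) :
    ∃ ξ : ρ.GNS, ∀ a, inner ℂ ξ (ρ.toPreGNS a : ρ.GNS) = Φ a := by
  let Ψ : ρ.PreGNS →L[ℂ] ℂ := (Φ ∘ₗ ρ.ofPreGNS.toLinearMap).mkContinuous √C fun a => by
    rw [← Real.sqrt_sq (norm_nonneg a), ← Real.sqrt_mul hC]
    refine Real.le_sqrt_of_sq_le ((hΦ (ρ.ofPreGNS a)).trans_eq ?_)
    rw [← ρ.preGNS_norm_sq, ← Complex.ofReal_pow, Complex.ofReal_re]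
  let Ψ' : ρ.GNS →L[ℂ] ℂ := Ψ.extend UniformSpace.Completion.toComplL
  refine ⟨(InnerProductSpace.toDual ℂ ρ.GNS).symm Ψ', fun a => ?_⟩
  rw [InnerProductSpace.toDual_symm_apply]
  exact Ψ.extend_eq UniformSpace.Completion.denseRange_coe
    (UniformSpace.Completion.isUniformInducing_coe _) (ρ.toPreGNS a)

end GelfandNaimarkSegal

section SummableWeights

open Filter Topology
open scoped BoundedContinuousFunction ComplexOrder

theorem sq_tsum_mul_le_tsum_mul_tsum {ι : Type*} {w f : ι → ℝ} (hw : ∀ i, 0 ≤ w i)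
    (hsum : Summable w) (hf : Summable fun i => w i * f i)
    (hf2 : Summable fun i => w i * f i ^ 2) :
    (∑' i, w i * f i) ^ 2 ≤ (∑' i, w i) * ∑' i, w i * f i ^ 2 :=
  le_of_tendsto_of_tendsto' (Tendsto.pow hf.hasSum 2) (Tendsto.mul hsum.hasSum hf2.hasSum) fun F =>
    Finset.sum_sq_le_sum_mul_sum_of_sq_le_mul F (fun i _ => hw i)
      (fun i _ => mul_nonneg (hw i) (sq_nonneg _)) fun i _ => le_of_eq (by ring)

variable {X : Type u} [TopologicalSpace X]

/-- The functional `φ ↦ ∑ᵢ β i • φ i` on bounded continuous functions. -/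
def weightedSum (β : X → ℂ) : StrongDual ℂ (X →ᵇ ℂ) :=
  ∑' i, β i • BoundedContinuousFunction.evalCLM ℂ i

variable {β : X → ℂ}

theorem norm_smul_evalCLM_le (i : X) :
    ‖β i • (BoundedContinuousFunction.evalCLM ℂ i : StrongDual ℂ (X →ᵇ ℂ))‖ ≤ ‖β i‖ := by
  refine ContinuousLinearMap.opNorm_le_bound _ (norm_nonneg _) fun φ => ?_
  exact (norm_mul_le _ _).trans (by gcongr; exact φ.norm_coe_le_norm i)

theorem hasSum_weightedSum_apply (hβ : Summable fun i => ‖β i‖) (φ : X →ᵇ ℂ) :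
    HasSum (fun i => β i * φ i) (weightedSum β φ) :=
  (Summable.of_norm_bounded hβ norm_smul_evalCLM_le).hasSum.mapL
    (ContinuousLinearMap.apply ℂ ℂ φ)

theorem norm_weightedSum_le (hβ : Summable fun i => ‖β i‖) : ‖weightedSum β‖ ≤ ∑' i, ‖β i‖ :=
  tsum_of_norm_bounded hβ.hasSum norm_smul_evalCLM_le

theorem hasSum_weightedSum_norm_star_mul_self (hβ : Summable fun i => ‖β i‖) (φ : X →ᵇ ℂ) :
    HasSum (fun i => ((‖β i‖ * ‖φ i‖ ^ 2 : ℝ) : ℂ))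
      (weightedSum (fun i => (‖β i‖ : ℂ)) (star φ * φ)) := by
  convert hasSum_weightedSum_apply (β := fun i => (‖β i‖ : ℂ)) (by simpa using hβ) (star φ * φ)
  simp [RCLike.star_def, Complex.conj_mul']

theorem norm_sq_weightedSum_le (hβ : Summable fun i => ‖β i‖) (φ : X →ᵇ ℂ) :
    ‖weightedSum β φ‖ ^ 2 ≤
      (∑' i, ‖β i‖) * (weightedSum (fun i => (‖β i‖ : ℂ)) (star φ * φ)).re := by
  have hsq := Complex.hasSum_re (hasSum_weightedSum_norm_star_mul_self hβ φ)
  simp only [Complex.ofReal_re] at hsq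
  have hnorm : Summable fun i => ‖β i‖ * ‖φ i‖ :=
    .of_nonneg_of_le (fun i => by positivity)
      (fun i => mul_le_mul_of_nonneg_left (φ.norm_coe_le_norm i) (norm_nonneg _))
      (hβ.mul_right ‖φ‖)
  calc ‖weightedSum β φ‖ ^ 2 ≤ (∑' i, ‖β i‖ * ‖φ i‖) ^ 2 := by
        rw [← (hasSum_weightedSum_apply hβ φ).tsum_eq]
        gcongr
        exact tsum_of_norm_bounded hnorm.hasSum fun i => norm_mul_le _ _
    _ ≤ _ := by
        rw [← hsq.tsum_eq]
        exact sq_tsum_mul_le_tsum_mul_tsum (fun i => norm_nonneg _) hβ hnorm hsq.summable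

attribute [local instance] CStarAlgebra.spectralOrder CStarAlgebra.spectralOrderedRing

theorem exists_positive_dominating_of_forall_tsum_le {β : ℕ → X → ℂ} {C : ℝ}
    (hβ : ∀ n, Summable fun i => ‖β n i‖) (hC : ∀ n, ∑' i, ‖β n i‖ ≤ C) :
    ∃ (Φ : StrongDual ℂ (X →ᵇ ℂ)) (ρ : (X →ᵇ ℂ) →ₚ[ℂ] ℂ),
      (∀ φ, ‖Φ φ‖ ^ 2 ≤ C * (ρ (star φ * φ)).re) ∧
      ∀ φ z, Tendsto (fun n => ∑' i, β n i * φ i) atTop (𝓝 z) → Φ φ = z := by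
  have hβ' : ∀ n, Summable fun i => ‖(‖β n i‖ : ℂ)‖ := fun n => by simpa using hβ n
  obtain ⟨Φ, hΦ⟩ := exists_strongDual_tendsto_of_norm_le (hyperfilter ℕ)
    fun n => (norm_weightedSum_le (hβ n)).trans (hC n)
  obtain ⟨ρ, hρ⟩ := exists_strongDual_tendsto_of_norm_le (hyperfilter ℕ)
    fun n => (norm_weightedSum_le (hβ' n)).trans (by simpa using hC n)
  have hpos : ∀ φ : X →ᵇ ℂ, 0 ≤ φ → 0 ≤ ρ φ := fun φ hφ => by
    obtain ⟨ψ, rfl⟩ := CStarAlgebra.nonneg_iff_eq_star_mul_self.mp hφ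
    exact ge_of_tendsto' (hρ _) fun n =>
      (hasSum_weightedSum_norm_star_mul_self (hβ n) ψ).nonneg fun i =>
        Complex.zero_le_real.mpr (by positivity)
  refine ⟨Φ, .mk₀ ρ.toLinearMap hpos, fun φ => ?_, fun φ z hz => ?_⟩
  · refine le_of_tendsto_of_tendsto' ((hΦ φ).norm.pow 2)
      (((Complex.continuous_re.tendsto _).comp (hρ (star φ * φ))).const_mul C) fun n => ?_
    refine (norm_sq_weightedSum_le (hβ n) φ).trans ?_
    refine mul_le_mul_of_nonneg_right (hC n) ?_
    exact (Complex.hasSum_re (hasSum_weightedSum_norm_star_mul_self (hβ n) φ)).nonneg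
      fun i => by rw [Complex.ofReal_re]; positivity
  · refine tendsto_nhds_unique (hΦ φ) ?_
    simpa only [(hasSum_weightedSum_apply (hβ _) φ).tsum_eq] using
      hz.mono_left Nat.hyperfilter_le_atTop

theorem exists_unitaryRep_inner_eq_of_tendsto_tsum {G : Type*} [Group G]
    (M : G →* unitary (X →ᵇ ℂ)) {β : ℕ → X → ℂ} {C : ℝ}
    (hβ : ∀ n, Summable fun i => ‖β n i‖) (hC : ∀ n, ∑' i, ‖β n i‖ ≤ C) :
    ∃ (𝓗 : Type u) (_ : NormedAddCommGroup 𝓗) (_ : InnerProductSpace ℂ 𝓗) (_ : CompleteSpace 𝓗)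
      (U : G →* (𝓗 ≃ₗᵢ[ℂ] 𝓗)) (ξ : 𝓗) (ζ : (X →ᵇ ℂ) → 𝓗), ∀ x φ z,
      Tendsto (fun n => ∑' i, β n i * (M x * φ : X →ᵇ ℂ) i) atTop (𝓝 z) →
        inner ℂ ξ (U x (ζ φ)) = z := by
  obtain ⟨Φ, ρ, hle, hlim⟩ := exists_positive_dominating_of_forall_tsum_le hβ hC
  have hC0 : 0 ≤ C := (tsum_nonneg fun i => norm_nonneg (β 0 i)).trans (hC 0)
  obtain ⟨ξ, hξ⟩ := exists_gns_inner_eq ρ Φ.toLinearMap hC0 hle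
  refine ⟨ρ.GNS, inferInstance, inferInstance, inferInstance, gnsUnitaryRep ρ M, ξ,
    fun φ => ρ.toPreGNS φ, fun x φ z hz => ?_⟩
  rw [gnsUnitaryRep_apply_coe, hξ]
  exact hlim _ z hz

end SummableWeights

section Lattices

open Module Submodule

theorem exists_basis_le_span_int_of_discreteTopology {E : Type*} [NormedAddCommGroup E]
    [NormedSpace ℝ E] [FiniteDimensional ℝ E] (K : Submodule ℤ E) [DiscreteTopology K] :
    ∃ B : Basis (Fin (finrank ℝ E)) ℝ E, K ≤ span ℤ (range B) := by
  let b : Basis _ ℤ K := Free.chooseBasis ℤ K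
  let w : Free.ChooseBasisIndex ℤ K → E := fun i => b i
  have hspan : span ℤ (range w) = K := by
    have h := congrArg (Submodule.map K.subtype) b.span_eq
    rwa [map_span, ← range_comp, map_subtype_top] at h
  have : DiscreteTopology (span ℤ (range w)) := by rwa [hspan]
  have hindep : LinearIndependent ℝ w := by
    rw [linearIndependent_iff_card_eq_finrank_span,
      Real.finrank_eq_int_finrank_of_discrete this, Set.finrank, hspan, finrank_eq_card_basis b]
  let B := Basis.extend hindep.linearIndepOn_id
  have : Fintype (hindep.linearIndepOn_id.extend (subset_univ _)) :=
    FiniteDimensional.fintypeBasisIndex B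
  refine ⟨B.reindex (Fintype.equivFinOfCardEq (finrank_eq_card_basis B).symm), ?_⟩
  rw [Basis.range_reindex, Basis.range_extend]
  exact hspan.ge.trans (span_mono (hindep.linearIndepOn_id.subset_extend _))

variable {d : ℕ}

theorem isFullRankLattice_span_range_basis (B : Basis (Fin d) ℝ (Rd d)) :
    IsFullRankLattice (span ℤ (range B) : Set (Rd d)) := by
  let T : Rd d ≃ₗ[ℝ] Rd d := (EuclideanSpace.basisFun (Fin d) ℝ).toBasis.equiv B (.refl _)
  have hT : ∀ x i, B.repr (T x) i = x i := fun x i => by simp [T, Basis.equiv]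
  refine ⟨T, T.bijective, Set.ext fun y => ?_⟩
  obtain ⟨x, rfl⟩ := T.surjective y
  rw [SetLike.mem_coe, B.mem_span_iff_repr_mem ℤ, LinearEquiv.coe_coe,
    T.injective.mem_set_image]
  simp [hT, eq_comm]

theorem exists_isFullRankLattice_superset (H : AddSubgroup (Rd d)) [DiscreteTopology H] :
    ∃ L, IsFullRankLattice L ∧ (H : Set (Rd d)) ⊆ L := by
  have : DiscreteTopology (AddSubgroup.toIntSubmodule H) := ‹DiscreteTopology H›
  obtain ⟨B, hB⟩ := exists_basis_le_span_int_of_discreteTopology (AddSubgroup.toIntSubmodule H)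
  let B' := B.reindex (finCongr (finrank_euclideanSpace_fin (𝕜 := ℝ) (n := d)))
  refine ⟨_, isFullRankLattice_span_range_basis B', ?_⟩
  rw [Basis.range_reindex]
  exact hB

end Lattices

section UniformDiscreteness

open Filter Topology

variable {d : ℕ}

theorem UniformlyDiscrete.eventually_notMem {A : Set (Rd d)} (hA : UniformlyDiscrete A)
    (x : Rd d) : ∀ᶠ y in 𝓝[≠] x, y ∉ A := by
  obtain ⟨η, hη, hsep⟩ := hA
  have hsub : (A ∩ ball x (η / 2)).Subsingleton := by
    rintro y ⟨hyA, hyx⟩ z ⟨hzA, hzx⟩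
    by_contra hyz
    have htriangle := dist_triangle_right y z x
    rw [mem_ball] at hyx hzx
    linarith [hsep y hyA z hzA hyz]
  filter_upwards [nhdsNE_le_cofinite x hsub.finite.compl_mem_cofinite,
    mem_nhdsWithin_of_mem_nhds (ball_mem_nhds x (half_pos hη))] with y hy hyx hyA
  exact hy ⟨hyA, hyx⟩

variable {ι : Type*} [Finite ι] {Λ : ι → Set (Rd d)}

theorem exists_uniform_separation (hΛ : ∀ i, UniformlyDiscrete (Λ i)) :
    ∃ η > (0 : ℝ), ∀ i, ∀ x ∈ Λ i, ∀ y ∈ Λ i, x ≠ y → η ≤ dist x y := by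
  choose η hη hsep using hΛ
  obtain ⟨r, hr, hrη⟩ := Pi.exists_forall_pos_add_lt (x := fun _ => 0) (y := η) hη
  simp only [zero_add] at hrη
  exact ⟨r, hr, fun i x hx y hy hxy => (hrη i).le.trans (hsep i x hx y hy hxy)⟩

theorem exists_finite_inter_ball_of_translates_subset_iUnion
    (hΛ : ∀ i, UniformlyDiscrete (Λ i)) {B : Set (Rd d)}
    (hB : ∀ F : Finset (Rd d), ↑F ⊆ B → ∃ t, ∀ x ∈ F, t + x ∈ ⋃ i, Λ i) :
    ∃ r > 0, (B ∩ ball 0 r).Finite := by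
  obtain ⟨η, hη, hsep⟩ := exists_uniform_separation hΛ
  have := Fintype.ofFinite ι
  refine ⟨η / 2, half_pos hη, ?_⟩
  by_contra hinf
  obtain ⟨F, hFB, hFcard⟩ := Set.Infinite.exists_subset_card_eq hinf (Fintype.card ι + 1)
  obtain ⟨t, ht⟩ := hB F (hFB.trans inter_subset_left)
  choose i hi using fun x : F => mem_iUnion.1 (ht x x.2)
  obtain ⟨⟨x, hx⟩, ⟨y, hy⟩, hxy, hi_eq⟩ :=
    Fintype.exists_ne_map_eq_of_card_lt i (by simp [hFcard])
  have hfar := hsep _ (t + x) (hi ⟨x, hx⟩) (t + y) (hi_eq ▸ hi ⟨y, hy⟩) (by simpa using hxy)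
  rw [dist_add_left] at hfar
  linarith [mem_ball.1 (hFB hx).2, mem_ball.1 (hFB hy).2, dist_triangle_right x y 0]

theorem discreteTopology_of_finite_inter_ball {E : Type*} [NormedAddCommGroup E]
    {H : AddSubgroup E} {r : ℝ} (hr : 0 < r) (hfin : ((H : Set E) ∩ ball 0 r).Finite) :
    DiscreteTopology H := by
  refine discreteTopology_of_isOpen_singleton_zero <|
    isOpen_singleton_of_finite_mem_nhds 0 (s := ball 0 r) (ball_mem_nhds 0 hr) ?_
  refine (hfin.preimage Subtype.val_injective.injOn).subset fun x hx => ⟨x.2, ?_⟩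
  simpa using hx

open Multiplicative in
theorem exists_translate_isFullRankLattice_of_mem_embeddedCosets
    (hΛ : ∀ i, UniformlyDiscrete (Λ i)) {B : Set (Multiplicative (Rd d))}
    (hB : B ∈ embeddedCosets (toAdd ⁻¹' ⋃ i, Λ i)) :
    ∃ L v, IsFullRankLattice L ∧ ofAdd ⁻¹' B ⊆ (fun y => v + y) '' L := by
  obtain ⟨H, hH, a, b, rfl⟩ := hB
  obtain ⟨r, hr, hfin⟩ := exists_finite_inter_ball_of_translates_subset_iUnion hΛ
    (B := H.toAddSubgroup') hH
  have := discreteTopology_of_finite_inter_ball hr hfin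
  obtain ⟨L, hL, hHL⟩ := exists_isFullRankLattice_superset H.toAddSubgroup'
  refine ⟨L, -toAdd a - toAdd b, hL, fun x hx => ⟨toAdd a + x + toAdd b, hHL hx, ?_⟩⟩
  simp only
  abel

open Multiplicative in
theorem exists_fin_isFullRankLattice_cover (hΛ : ∀ i, UniformlyDiscrete (Λ i))
    {C : Set (Set (Multiplicative (Rd d)))} (hC : C ⊆ embeddedCosets (toAdd ⁻¹' ⋃ i, Λ i))
    (hfin : C.Finite) :
    ∃ (J : ℕ) (L : Fin J → Set (Rd d)) (v : Fin J → Rd d), (∀ j, IsFullRankLattice (L j)) ∧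
      ofAdd ⁻¹' ⋃₀ C ⊆ ⋃ j, (fun y => v j + y) '' L j := by
  obtain ⟨J, B, -, rfl⟩ := hfin.fin_param
  choose L v hL hBL using fun j =>
    exists_translate_isFullRankLattice_of_mem_embeddedCosets hΛ (hC (mem_range_self j))
  refine ⟨J, L, v, hL, ?_⟩
  rw [sUnion_range, preimage_iUnion]
  exact iUnion_mono hBL

end UniformDiscreteness

section DilatedWeights

/-- The `L¹`-normalised dilate `γ ↦ ε ^ d g(ε γ)` of a function on `ℝ^d`. -/
def dilate {d : ℕ} (g : Rd d → ℂ) (ε : ℝ) (γ : Rd d) : ℂ := (ε : ℂ) ^ d * g (ε • γ)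

theorem exists_dyadic_bound {y : ℝ} (hy : 0 ≤ y) : ∃ k : ℕ, y < 2 ^ k ∧ 2 ^ k ≤ 2 * (1 + y) := by
  rcases lt_or_ge y 1 with hy1 | hy1
  · exact ⟨0, by simpa using hy1, by linarith⟩
  · obtain ⟨k, hk, hky⟩ := exists_nat_pow_near hy1 one_lt_two
    exact ⟨k + 1, hky, by rw [pow_succ]; linarith⟩

section PolynomialGrowth

variable {E : Type*} [SeminormedAddCommGroup E] [NormedSpace ℝ E]

theorem mul_inv_one_add_norm_pow_le_tsum_dyadic (w : E → ℝ≥0∞) (d : ℕ) {ε : ℝ} (hε : 0 < ε)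
    (γ : E) : w γ * ENNReal.ofReal (ε ^ d / (1 + ‖ε • γ‖) ^ (d + 1)) ≤
      ∑' k : ℕ, ENNReal.ofReal (ε ^ d * (2 / 2 ^ k) ^ (d + 1)) *
        (if ‖γ‖ < 2 ^ k * ε⁻¹ then w γ else 0) := by
  obtain ⟨k, hlt, hle⟩ := exists_dyadic_bound (norm_nonneg (ε • γ))
  have hball : ‖γ‖ < 2 ^ k * ε⁻¹ := by
    rw [← div_eq_mul_inv, lt_div_iff₀' hε]
    rwa [norm_smul, Real.norm_of_nonneg hε.le] at hlt
  refine le_trans ?_ (ENNReal.le_tsum k)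
  rw [if_pos hball, mul_comm, div_eq_mul_inv, ← inv_pow]
  gcongr
  rw [inv_le_comm₀ (by positivity) (by positivity), inv_div, div_le_iff₀' two_pos]
  exact hle

theorem tsum_mul_inv_one_add_norm_pow_le {w : E → ℝ≥0∞} {d : ℕ} {C r₀ ε : ℝ}
    (hw : ∀ r ≥ r₀, (∑' γ, if ‖γ‖ < r then w γ else 0) ≤ ENNReal.ofReal (C * r ^ d))
    (hε : 0 < ε) (hεr : r₀ ≤ ε⁻¹) :
    ∑' γ, w γ * ENNReal.ofReal (ε ^ d / (1 + ‖ε • γ‖) ^ (d + 1)) ≤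
      ENNReal.ofReal (2 ^ (d + 2) * C) := by
  have hball (k : ℕ) : (∑' γ, if ‖γ‖ < 2 ^ k * ε⁻¹ then w γ else 0) ≤
      ENNReal.ofReal (C * (2 ^ k * ε⁻¹) ^ d) :=
    hw _ (hεr.trans (le_mul_of_one_le_left (by positivity) (one_le_pow₀ one_le_two)))
  have hshell (k : ℕ) : ε ^ d * (2 / 2 ^ k) ^ (d + 1) * (C * (2 ^ k * ε⁻¹) ^ d) =
      2 ^ (d + 1) * C * (1 / 2) ^ k := by
    rw [mul_pow, div_pow, div_pow, pow_succ (2 ^ k : ℝ) d, inv_pow, one_pow]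
    field_simp
  calc ∑' γ, w γ * ENNReal.ofReal (ε ^ d / (1 + ‖ε • γ‖) ^ (d + 1))
      ≤ ∑' (γ) (k : ℕ), ENNReal.ofReal (ε ^ d * (2 / 2 ^ k) ^ (d + 1)) *
          (if ‖γ‖ < 2 ^ k * ε⁻¹ then w γ else 0) :=
        ENNReal.tsum_le_tsum (mul_inv_one_add_norm_pow_le_tsum_dyadic w d hε)
    _ = ∑' k : ℕ, ENNReal.ofReal (ε ^ d * (2 / 2 ^ k) ^ (d + 1)) *
          ∑' γ, (if ‖γ‖ < 2 ^ k * ε⁻¹ then w γ else 0) := by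
        rw [ENNReal.tsum_comm]
        simp_rw [ENNReal.tsum_mul_left]
    _ ≤ ∑' k : ℕ, ENNReal.ofReal (2 ^ (d + 1) * C) * ENNReal.ofReal ((1 / 2) ^ k) := by
        refine ENNReal.tsum_le_tsum fun k => (mul_le_mul_right (hball k) _).trans_eq ?_
        rw [← ENNReal.ofReal_mul (by positivity), hshell, ENNReal.ofReal_mul' (by positivity)]
    _ = ENNReal.ofReal (2 ^ (d + 2) * C) := by
        rw [ENNReal.tsum_mul_left, ← ENNReal.ofReal_tsum_of_nonneg (fun k => by positivity)
          summable_geometric_two, tsum_geometric_two, ← ENNReal.ofReal_mul' two_pos.le]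
        ring_nf

end PolynomialGrowth

theorem tsum_enorm_mul_dilate_le {d : ℕ} {b g : Rd d → ℂ} {K C r₀ ε : ℝ}
    (hg : ∀ y, ‖g y‖ ≤ K / (1 + ‖y‖) ^ (d + 1))
    (hb : ∀ r ≥ r₀, ballVar b r ≤ ENNReal.ofReal (C * r ^ d)) (hε : 0 < ε) (hεr : r₀ ≤ ε⁻¹) :
    ∑' γ, ‖b γ * dilate g ε γ‖ₑ ≤ ENNReal.ofReal K * ENNReal.ofReal (2 ^ (d + 2) * C) := by
  have hterm (γ : Rd d) : ‖b γ * dilate g ε γ‖ₑ ≤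
      ENNReal.ofReal K * (‖b γ‖ₑ * ENNReal.ofReal (ε ^ d / (1 + ‖ε • γ‖) ^ (d + 1))) := by
    rw [enorm_mul, mul_left_comm, ← ENNReal.ofReal_mul' (by positivity), ← ofReal_norm (dilate ..),
      dilate, norm_mul, norm_pow, Complex.norm_real, Real.norm_of_nonneg hε.le]
    refine mul_le_mul_right (ENNReal.ofReal_le_ofReal ?_) _
    calc ε ^ d * ‖g (ε • γ)‖ ≤ ε ^ d * (K / (1 + ‖ε • γ‖) ^ (d + 1)) := by gcongr; exact hg _
      _ = K * (ε ^ d / (1 + ‖ε • γ‖) ^ (d + 1)) := mul_div_left_comm ..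
  refine (ENNReal.tsum_le_tsum hterm).trans ?_
  rw [ENNReal.tsum_mul_left]
  gcongr
  exact tsum_mul_inv_one_add_norm_pow_le hb hε hεr

end DilatedWeights

section FourierInversion

open Filter Topology FourierTransform

variable {d : ℕ}

theorem fourierInv_dilate_translate (χ : Rd d → ℂ) (x : Rd d) {ε : ℝ} (hε : 0 < ε) (γ : Rd d) :
    𝓕⁻ (fun v => χ (ε⁻¹ • (v - x))) γ = dilate (𝓕⁻ χ) ε γ * e2pi x γ := by
  let h : Rd d → ℂ := fun u => Complex.exp ((2 * Real.pi * ⟪u, ε • γ⟫ : ℝ) * Complex.I) • χ u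
  have hphase (w : Rd d) : Complex.exp ((2 * Real.pi * ⟪w + x, γ⟫ : ℝ) * Complex.I) •
      χ (ε⁻¹ • (w + x - x)) = e2pi x γ * h (ε⁻¹ • w) := by
    have hinner : ⟪ε⁻¹ • w, ε • γ⟫ = ⟪w, γ⟫ := by
      rw [inner_smul_left, inner_smul_right, conj_trivial, inv_mul_cancel_left₀ hε.ne']
    simp only [h, add_sub_cancel_right, smul_eq_mul, ← mul_assoc, hinner, inner_add_left, e2pi,
      ← Complex.exp_add]
    congr 2
    push_cast
    ring
  calc 𝓕⁻ (fun v => χ (ε⁻¹ • (v - x))) γ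
      = ∫ w, Complex.exp ((2 * Real.pi * ⟪w + x, γ⟫ : ℝ) * Complex.I) •
          χ (ε⁻¹ • (w + x - x)) := by
        rw [Real.fourierInv_eq', ← integral_add_right_eq_self _ x]
    _ = e2pi x γ * ∫ w, h (ε⁻¹ • w) := by simp_rw [hphase, integral_const_mul]
    _ = e2pi x γ * ((ε : ℂ) ^ d * 𝓕⁻ χ (ε • γ)) := by
        rw [Measure.integral_comp_inv_smul volume h, Real.fourierInv_eq',
          finrank_euclideanSpace_fin, abs_of_pos (pow_pos hε d), Complex.real_smul,
          Complex.ofReal_pow]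
    _ = dilate (𝓕⁻ χ) ε γ * e2pi x γ := mul_comm _ _

theorem exists_schwartzMap_bump (V : Type*) [NormedAddCommGroup V] [InnerProductSpace ℝ V]
    [FiniteDimensional ℝ V] : ∃ χ : 𝓢(V, ℂ), χ 0 = 1 ∧ ∀ v, 1 ≤ ‖v‖ → χ v = 0 := by
  let φ : ContDiffBump (0 : V) := ⟨1 / 2, 1, by norm_num, by norm_num⟩
  have hsmooth : ContDiff ℝ (⊤ : ℕ∞) fun v => (φ v : ℂ) :=
    Complex.ofRealCLM.contDiff.comp φ.contDiff
  have hcompact : HasCompactSupport fun v => (φ v : ℂ) :=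
    φ.hasCompactSupport.comp_left Complex.ofReal_zero
  refine ⟨hcompact.toSchwartzMap hsmooth, ?_, fun v hv => ?_⟩
  · simpa using φ.one_of_mem_closedBall (mem_closedBall_self (by norm_num))
  · simpa using φ.zero_of_le_dist (by simpa [φ] using hv)

theorem exists_norm_le_div_one_add_norm_pow {V F : Type*} [NormedAddCommGroup V] [NormedSpace ℝ V]
    [NormedAddCommGroup F] [NormedSpace ℝ F] (g : 𝓢(V, F)) (k : ℕ) :
    ∃ K, ∀ y, ‖g y‖ ≤ K / (1 + ‖y‖) ^ k := by
  have hdecay := SchwartzMap.one_add_le_sup_seminorm_apply (𝕜 := ℝ) (m := (k, 0)) le_rfl le_rfl g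
  simp only [norm_iteratedFDeriv_zero] at hdecay
  exact ⟨_, fun y => (le_div_iff₀' (by positivity)).2 (hdecay y)⟩

theorem exists_schwartzMap_dilate_translate {V F : Type*} [NormedAddCommGroup V] [NormedSpace ℝ V]
    [NormedAddCommGroup F] [NormedSpace ℝ F] (χ : 𝓢(V, F)) (x : V) {ε : ℝ} (hε : ε ≠ 0) :
    ∃ ψ : 𝓢(V, F), ⇑ψ = fun v => χ (ε⁻¹ • (v - x)) :=
  ⟨(compCLMOfContinuousLinearEquiv ℝ
    (ContinuousLinearEquiv.smulLeft (Units.mk0 ε⁻¹ (inv_ne_zero hε))) χ).compSubConstCLM ℝ x, rfl⟩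

variable {a b : Rd d → ℂ} {f : TemperedDist d}

theorem RepMeasure.apply_eq_of_forall_ne {φ : 𝓢(Rd d, ℂ)} (ha : RepMeasure a f) {x : Rd d}
    (hφ : ∀ y, y ≠ x → a y ≠ 0 → φ y = 0) : f φ = a x * φ x := by
  rw [ha.2.2]
  refine tsum_eq_single x fun y hy => ?_
  by_cases hay : a y = 0
  · rw [hay, zero_mul]
  · rw [hφ y hy hay, mul_zero]

theorem fourierTD_fourierInv (φ : 𝓢(Rd d, ℂ)) : fourierTD f (𝓕⁻ φ) = f φ := by
  simp [fourierTD]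

theorem RepMeasure.eventually_eq_tsum_dilate (ha : RepMeasure a f)
    (hb : RepMeasure b (fourierTD f)) {χ : 𝓢(Rd d, ℂ)} (hχ0 : χ 0 = 1)
    (hχ : ∀ v, 1 ≤ ‖v‖ → χ v = 0) {x : Rd d} (hx : ∀ᶠ y in 𝓝[≠] x, a y = 0) :
    ∀ᶠ ε in 𝓝[>] (0 : ℝ), a x = ∑' γ, b γ * dilate (𝓕⁻ χ : 𝓢(Rd d, ℂ)) ε γ * e2pi x γ := by
  obtain ⟨e, he, hisolated⟩ := Metric.eventually_nhds_iff.1 (eventually_nhdsWithin_iff.1 hx)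
  filter_upwards [Ioo_mem_nhdsGT he] with ε ⟨hε, hεe⟩
  obtain ⟨ψ, hψ⟩ := exists_schwartzMap_dilate_translate χ x hε.ne'
  have hvanish (y : Rd d) (hyx : y ≠ x) (hay : a y ≠ 0) : ψ y = 0 := by
    have hfar : ε ≤ ‖y - x‖ := by
      rw [← dist_eq_norm]
      by_contra! hnear
      exact hay (hisolated (hnear.trans hεe) hyx)
    rw [hψ]
    refine hχ _ ?_
    rwa [norm_smul, norm_inv, Real.norm_of_nonneg hε.le, le_inv_mul_iff₀ hε, mul_one]
  calc a x = f ψ := by rw [ha.apply_eq_of_forall_ne hvanish, hψ]; simp [hχ0]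
    _ = ∑' γ, b γ * (𝓕⁻ ψ : 𝓢(Rd d, ℂ)) γ := by rw [← fourierTD_fourierInv, hb.2.2]
    _ = ∑' γ, b γ * dilate (𝓕⁻ χ : 𝓢(Rd d, ℂ)) ε γ * e2pi x γ := by
        refine tsum_congr fun γ => ?_
        rw [SchwartzMap.fourierInv_coe, hψ, fourierInv_dilate_translate _ _ hε, mul_assoc,
          SchwartzMap.fourierInv_coe]

end FourierInversion

section CharacterSums

open Filter Topology FourierTransform Multiplicative
open scoped BoundedContinuousFunction

variable {ι : Type u} {d : ℕ}

section Characters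

variable (d) in
/-- The characters of `ℝ^d`: `x` is sent to the bounded function `γ ↦ e^{2πi⟨x,γ⟩}`. -/
def e2piHom : Multiplicative (Rd d) →* (Rd d →ᵇ ℂ) :=
  BoundedContinuousFunction.charMonoidHom (L := innerₗ (Rd d)) Real.continuous_fourierChar
    continuous_inner

theorem e2piHom_apply (x : Multiplicative (Rd d)) (γ : Rd d) :
    e2piHom d x γ = e2pi (toAdd x) γ := by
  calc e2piHom d x γ = (Real.fourierChar ⟪γ, toAdd x⟫ : ℂ) := rfl
    _ = e2pi (toAdd x) γ := by
        rw [Real.fourierChar_apply, e2pi, real_inner_comm]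
        congr 1
        push_cast
        ring

theorem norm_e2piHom_apply (x : Multiplicative (Rd d)) (γ : Rd d) : ‖e2piHom d x γ‖ = 1 :=
  Circle.norm_coe _

variable [TopologicalSpace ι]

variable (ι d) in
/-- The characters of `ℝ^d` as unitary bounded functions on `ι × ℝ^d`, constant in the first
variable. The factor `ι` lets one state carry several measures at once. -/
def unitaryCharacterHom : Multiplicative (Rd d) →* unitary ((ι × Rd d) →ᵇ ℂ) where
  toFun x := ⟨(e2piHom d x).compContinuous ⟨Prod.snd, continuous_snd⟩, by
    rw [Unitary.mem_iff]
    constructor <;> ext i <;>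
      simp [← Complex.normSq_eq_conj_mul_self, Complex.mul_conj, Complex.normSq_eq_norm_sq,
        norm_e2piHom_apply]⟩
  map_one' := by ext; simp
  map_mul' x y := by ext; simp

theorem unitaryCharacterHom_apply (x : Multiplicative (Rd d)) (i : ι × Rd d) :
    (unitaryCharacterHom ι d x : (ι × Rd d) →ᵇ ℂ) i = e2pi (toAdd x) i.2 :=
  e2piHom_apply x i.2

variable [DiscreteTopology ι] [CompactSpace ι] [DecidableEq ι]

variable (d) in
/-- The indicator function of the slice `{s} × ℝ^d` of `ι × ℝ^d`. -/
def sliceIndicator (s : ι) : (ι × Rd d) →ᵇ ℂ :=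
  (BoundedContinuousFunction.mkOfCompact
    ⟨Pi.single s 1, continuous_of_discreteTopology⟩).compContinuous ⟨Prod.fst, continuous_fst⟩

theorem tsum_mul_unitaryCharacterHom_mul_sliceIndicator (β : ι × Rd d → ℂ)
    (x : Multiplicative (Rd d)) (s : ι) :
    ∑' i, β i * (unitaryCharacterHom ι d x * sliceIndicator d s : (ι × Rd d) →ᵇ ℂ) i =
      ∑' γ, β (s, γ) * e2pi (toAdd x) γ := by
  rw [← (Prod.mk_right_injective s).tsum_eq]
  · simp [unitaryCharacterHom_apply, sliceIndicator]
  · rintro ⟨s', γ⟩ hne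
    obtain rfl : s' = s := by
      by_contra hs
      exact hne (by simp [sliceIndicator, hs])
    exact ⟨γ, rfl⟩

end Characters

theorem summable_norm_and_tsum_le_toReal {X E : Type*} [NormedAddCommGroup E] {β : X → E}
    {B : ℝ≥0∞} (hB : B ≠ ∞) (h : ∑' i, ‖β i‖ₑ ≤ B) :
    (Summable fun i => ‖β i‖) ∧ ∑' i, ‖β i‖ ≤ B.toReal := by
  have htop : ∑' i, ‖β i‖ₑ ≠ ∞ := ne_top_of_le_ne_top hB h
  refine ⟨by simpa only [toReal_enorm] using ENNReal.summable_toReal htop, ?_⟩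
  simpa only [toReal_enorm, ENNReal.tsum_toReal_eq (ENNReal.ne_top_of_tsum_ne_top htop)] using
    ENNReal.toReal_mono hB h

variable [Finite ι] {a b : ι → Rd d → ℂ} {f : ι → TemperedDist d}

theorem exists_eventually_tsum_enorm_mul_dilate_le {g : Rd d → ℂ} {K : ℝ}
    (hg : ∀ y, ‖g y‖ ≤ K / (1 + ‖y‖) ^ (d + 1))
    (hvar : ∀ s, ∃ C r₀ : ℝ, ∀ r ≥ r₀, ballVar (b s) r ≤ ENNReal.ofReal (C * r ^ d)) :
    ∃ B : ℝ≥0∞, B ≠ ∞ ∧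
      ∀ᶠ ε in 𝓝[>] (0 : ℝ), ∑' i : ι × Rd d, ‖b i.1 i.2 * dilate g ε i.2‖ₑ ≤ B := by
  have := Fintype.ofFinite ι
  choose C r₀ hC using hvar
  refine ⟨∑ s, ENNReal.ofReal K * ENNReal.ofReal (2 ^ (d + 2) * C s),
    ENNReal.sum_ne_top.2 fun s _ => ENNReal.mul_ne_top ENNReal.ofReal_ne_top
      ENNReal.ofReal_ne_top, ?_⟩
  filter_upwards [self_mem_nhdsWithin,
    eventually_all.2 fun s => tendsto_inv_nhdsGT_zero.eventually_ge_atTop (r₀ s)] with ε hε hεr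
  rw [ENNReal.tsum_prod', tsum_fintype]
  exact Finset.sum_le_sum fun s _ => tsum_enorm_mul_dilate_le hg (hC s) hε (hεr s)

theorem exists_unitaryRep_inner_eq_masses (hrep : ∀ s, RepMeasure (a s) (f s))
    (hrepF : ∀ s, RepMeasure (b s) (fourierTD (f s)))
    (hvar : ∀ s, ∃ C r₀ : ℝ, ∀ r ≥ r₀, ballVar (b s) r ≤ ENNReal.ofReal (C * r ^ d))
    (hisolated : ∀ s x, ∀ᶠ y in 𝓝[≠] x, a s y = 0) :
    ∃ (𝓗 : Type u) (_ : NormedAddCommGroup 𝓗) (_ : InnerProductSpace ℂ 𝓗) (_ : CompleteSpace 𝓗)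
      (U : Multiplicative (Rd d) →* (𝓗 ≃ₗᵢ[ℂ] 𝓗)) (ξ : 𝓗) (ζ : ι → 𝓗),
      ∀ s x, inner ℂ ξ (U x (ζ s)) = a s (toAdd x) := by
  classical
  let : TopologicalSpace ι := ⊥
  have : DiscreteTopology ι := ⟨rfl⟩
  obtain ⟨χ, hχ0, hχ⟩ := exists_schwartzMap_bump (Rd d)
  obtain ⟨K, hK⟩ := exists_norm_le_div_one_add_norm_pow (𝓕⁻ χ : 𝓢(Rd d, ℂ)) (d + 1)
  obtain ⟨B, hB, hbound⟩ := exists_eventually_tsum_enorm_mul_dilate_le hK hvar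
  obtain ⟨ε, hε, hεB⟩ := exists_seq_forall_of_frequently hbound.frequently
  obtain ⟨𝓗, i₁, i₂, i₃, U, ξ, ζ, hinner⟩ := exists_unitaryRep_inner_eq_of_tendsto_tsum
    (unitaryCharacterHom ι d) (fun n => (summable_norm_and_tsum_le_toReal hB (hεB n)).1)
    fun n => (summable_norm_and_tsum_le_toReal hB (hεB n)).2
  refine ⟨𝓗, i₁, i₂, i₃, U, ξ, fun s => ζ (sliceIndicator d s), fun s x => hinner _ _ _ ?_⟩
  simp only [tsum_mul_unitaryCharacterHom_mul_sliceIndicator]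
  exact tendsto_const_nhds.congr' <| hε.eventually <|
    (hrep s).eventually_eq_tsum_dilate (hrepF s) hχ0 hχ (hisolated s (toAdd x))

end CharacterSums

/-- (First part of Theorem 9.) Let `μ_1, …, μ_S` be pure point
measures in `S*(ℝ^d)` with uniformly discrete supports, whose Fourier
transforms are pure point measures with `|μ̂_s|(B(0,r)) = O(r^d)`, and with
`inf_{λ} Σ_s |μ_s(λ)| > 0` over the union of the supports. Then each support is
contained in a finite union of translates of full-rank lattices. -/
theorem statement3 {d S : ℕ} (a : Fin S → Rd d → ℂ) (f : Fin S → TemperedDist d)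
    (b : Fin S → Rd d → ℂ)
    (hrep : ∀ s, RepMeasure (a s) (f s))
    (hud : ∀ s, UniformlyDiscrete {x | a s x ≠ 0})
    (hrepF : ∀ s, RepMeasure (b s) (fourierTD (f s)))
    (hvar : ∀ s, ∃ C r₀ : ℝ, ∀ r ≥ r₀, ballVar (b s) r ≤ ENNReal.ofReal (C * r ^ d))
    (hinf : ∃ ε > (0:ℝ), ∀ x : Rd d, (∃ s, a s x ≠ 0) → ε ≤ ∑ s, ‖a s x‖) :
    ∀ s, ∃ (J : ℕ) (L : Fin J → Set (Rd d)) (v : Fin J → Rd d),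
      (∀ j, IsFullRankLattice (L j)) ∧
      {x | a s x ≠ 0} ⊆ ⋃ j, (fun y => v j + y) '' (L j) := by
  obtain ⟨c, hc, hgap⟩ := hinf
  obtain ⟨𝓗, _, _, _, U, ξ, ζ, hinner⟩ := exists_unitaryRep_inner_eq_masses hrep hrepF hvar
    fun s x => ((hud s).eventually_notMem x).mono fun y => not_not.1
  have hmass (x : Multiplicative (Rd d)) : coeffMass U ζ ξ x = ∑ s, ‖a s x.toAdd‖ :=
    Finset.sum_congr rfl fun s _ => by rw [norm_inner_symm, hinner]
  have hsupport : Function.support (coeffMass U ζ ξ) =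
      Multiplicative.toAdd ⁻¹' ⋃ s, {x | a s x ≠ 0} := by
    ext x
    simp [hmass, Finset.sum_eq_zero_iff_of_nonneg]
  have hcoeffGap : HasCoeffGap U ζ c ξ := fun x hx => by
    rw [hmass]
    exact hgap _ (mem_iUnion.1 (hsupport.subset hx))
  obtain ⟨C, hC, hfin, hcover⟩ := exists_finite_embeddedCosets_cover hc hcoeffGap
  rw [hsupport] at hC hcover
  obtain ⟨J, L, v, hL, hLv⟩ := exists_fin_isFullRankLattice_cover hud hC hfin
  exact fun s => ⟨J, L, v, hL, fun x hx => hLv (hcover (mem_iUnion.2 ⟨s, hx⟩))⟩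
end
end
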